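/- Let p ∈ (0,1) and let J_t = exp((α − β²/2) t + β B_t) be a geometric Brownian motion with drift α ∈ ℝ and volatility β > 0, J_0 = 1 (B a standard Brownian motion). Let k̃ = sup over u ∈ [0,1] of { p α u − (p(1−p)/2) β² u² }. Then for all t ≥ 0 and x, y ≥ 0, 0 ≤ E[(x + y J_t)^p] ≤ e^{k̃ t} (x + y)^p. -/

import Mathlib

open MeasureTheory ProbabilityTheory
open scoped NNReal

/-!
Let `Z` be the value of the strategy that starts with capital `1` and keeps the fraction `u` of its
wealth in the asset `J`, where `u ∈ [0, 1]` maximizes the growth rate of `E[Z ^ p]`. The first-order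
condition at `u` says that, deflated by `Z ^ (p - 1)`, every other constant-proportion strategy, in
particular cash and `J` itself, grows in mean at rate at most `k`. Hence `E[Z ^ p] ≤ exp (k t)` and,
with `W = x + y J`, also `E[Z ^ (p - 1) W] ≤ exp (k t) (x + y)`. Hölder's inequality applied to
`W ^ p = (Z ^ (p - 1) W) ^ p * (Z ^ p) ^ (1 - p)` combines the two.
-/

lemma le_sSup_of_isCompact_of_continuousOn {E : Type*} [TopologicalSpace E] {s : Set E} {f : E → ℝ}
    {u : E} (hs : IsCompact s) (hf : ContinuousOn f s) (hu : u ∈ s) :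
    f u ≤ sSup {z : ℝ | ∃ w : E, w ∈ s ∧ z = f w} := by
  obtain ⟨M, hM⟩ := hs.bddAbove_image hf
  refine le_csSup ⟨M, ?_⟩ ⟨u, hu, rfl⟩
  rintro z ⟨w, hw, rfl⟩
  exact hM ⟨w, hw, rfl⟩

lemma sub_mul_nonpos_of_isMaxOn {s : Set ℝ} {f : ℝ → ℝ} {f' u w : ℝ} (hs : Convex ℝ s)
    (hmax : IsMaxOn f s u) (hf : HasDerivAt f f' u) (hu : u ∈ s) (hw : w ∈ s) :
    (w - u) * f' ≤ 0 := by
  simpa using hmax.localize.hasFDerivWithinAt_nonpos hf.hasFDerivAt.hasFDerivWithinAt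
    (sub_mem_posTangentConeAt_of_segment_subset (hs.segment_subset hu hw))

section Holder

variable {Ω : Type*} [MeasurableSpace Ω] {μ : Measure Ω} {f g : Ω → ℝ} {a b : ℝ}

lemma integrable_rpow_mul_rpow (hf : Integrable f μ) (hg : Integrable g μ) (hf₀ : 0 ≤ f)
    (hg₀ : 0 ≤ g) (ha : 0 ≤ a) (hb : 0 ≤ b) (hab : a + b = 1) :
    Integrable (fun ω ↦ f ω ^ a * g ω ^ b) μ := by
  refine ((hf.const_mul a).add (hg.const_mul b)).mono' ?_ (.of_forall fun ω ↦ ?_)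
  · exact ((hf.aemeasurable.pow_const a).mul (hg.aemeasurable.pow_const b)).aestronglyMeasurable
  · rw [Real.norm_of_nonneg (mul_nonneg (Real.rpow_nonneg (hf₀ ω) a) (Real.rpow_nonneg (hg₀ ω) b))]
    exact Real.geom_mean_le_arith_mean2_weighted ha hb (hf₀ ω) (hg₀ ω) hab

lemma integral_rpow_mul_rpow_le (hf : Integrable f μ) (hg : Integrable g μ) (hf₀ : 0 ≤ f)
    (hg₀ : 0 ≤ g) (ha : 0 ≤ a) (hb : 0 ≤ b) (hab : a + b = 1) :
    ∫ ω, f ω ^ a * g ω ^ b ∂μ ≤ (∫ ω, f ω ∂μ) ^ a * (∫ ω, g ω ∂μ) ^ b := by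
  have hF : 0 ≤ ∫ ω, f ω ∂μ := integral_nonneg hf₀
  have hG : 0 ≤ ∫ ω, g ω ∂μ := integral_nonneg hg₀
  have hfa (ω : Ω) : 0 ≤ f ω ^ a := Real.rpow_nonneg (hf₀ ω) a
  have hgb (ω : Ω) : 0 ≤ g ω ^ b := Real.rpow_nonneg (hg₀ ω) b
  rw [← ENNReal.ofReal_le_ofReal_iff (by positivity)]
  calc ENNReal.ofReal (∫ ω, f ω ^ a * g ω ^ b ∂μ)
      = ∫⁻ ω, ENNReal.ofReal (f ω ^ a * g ω ^ b) ∂μ :=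
        ofReal_integral_eq_lintegral_ofReal (integrable_rpow_mul_rpow hf hg hf₀ hg₀ ha hb hab)
          (.of_forall fun ω ↦ mul_nonneg (hfa ω) (hgb ω))
    _ = ∫⁻ ω, ENNReal.ofReal (f ω) ^ a * ENNReal.ofReal (g ω) ^ b ∂μ := by
        simp only [ENNReal.ofReal_mul (hfa _), ENNReal.ofReal_rpow_of_nonneg (hf₀ _) ha,
          ENNReal.ofReal_rpow_of_nonneg (hg₀ _) hb]
    _ ≤ (∫⁻ ω, ENNReal.ofReal (f ω) ∂μ) ^ a * (∫⁻ ω, ENNReal.ofReal (g ω) ∂μ) ^ b :=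
        ENNReal.lintegral_mul_norm_pow_le hf.aemeasurable.ennreal_ofReal
          hg.aemeasurable.ennreal_ofReal ha hb hab
    _ = ENNReal.ofReal ((∫ ω, f ω ∂μ) ^ a * (∫ ω, g ω ∂μ) ^ b) := by
        rw [← ofReal_integral_eq_lintegral_ofReal hf (.of_forall hf₀),
          ← ofReal_integral_eq_lintegral_ofReal hg (.of_forall hg₀),
          ENNReal.ofReal_rpow_of_nonneg hF ha, ENNReal.ofReal_rpow_of_nonneg hG hb,
          ENNReal.ofReal_mul (Real.rpow_nonneg hF a)]

end Holder

section Deflator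

variable {Ω : Type*} [MeasurableSpace Ω] {μ : Measure Ω} {W Z : Ω → ℝ} {p K s : ℝ}

lemma rpow_eq_deflated_rpow_mul {w z : ℝ} (hw : 0 ≤ w) (hz : 0 < z) (p : ℝ) :
    w ^ p = (z ^ (p - 1) * w) ^ p * (z ^ p) ^ (1 - p) := by
  have cancel : z ^ ((p - 1) * p) * z ^ (p * (1 - p)) = 1 := by
    rw [← Real.rpow_add hz, show (p - 1) * p + p * (1 - p) = 0 by ring, Real.rpow_zero]
  rw [Real.mul_rpow (Real.rpow_nonneg hz.le _) hw, ← Real.rpow_mul hz.le, ← Real.rpow_mul hz.le,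
    mul_right_comm, cancel, one_mul]

lemma integrable_rpow_of_deflated (hp : p ∈ Set.Icc 0 1) (hW : ∀ ω, 0 ≤ W ω) (hZ : ∀ ω, 0 < Z ω)
    (hZp : Integrable (fun ω ↦ Z ω ^ p) μ) (hZW : Integrable (fun ω ↦ Z ω ^ (p - 1) * W ω) μ) :
    Integrable (fun ω ↦ W ω ^ p) μ := by
  simp only [fun ω ↦ rpow_eq_deflated_rpow_mul (hW ω) (hZ ω) p]
  exact integrable_rpow_mul_rpow hZW hZp
    (fun ω ↦ mul_nonneg (Real.rpow_nonneg (hZ ω).le _) (hW ω))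
    (fun ω ↦ Real.rpow_nonneg (hZ ω).le _) hp.1 (sub_nonneg.2 hp.2) (add_sub_cancel _ _)

lemma integral_rpow_le_of_deflated (hp : p ∈ Set.Icc 0 1) (hW : ∀ ω, 0 ≤ W ω)
    (hZ : ∀ ω, 0 < Z ω) (hZp : Integrable (fun ω ↦ Z ω ^ p) μ)
    (hZW : Integrable (fun ω ↦ Z ω ^ (p - 1) * W ω) μ) (hs : 0 ≤ s)
    (hZp_le : ∫ ω, Z ω ^ p ∂μ ≤ K) (hZW_le : ∫ ω, Z ω ^ (p - 1) * W ω ∂μ ≤ K * s) :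
    ∫ ω, W ω ^ p ∂μ ≤ K * s ^ p := by
  obtain ⟨hp₀, hp₁⟩ := hp
  have hZp₀ (ω : Ω) : 0 ≤ Z ω ^ p := Real.rpow_nonneg (hZ ω).le _
  have hZW₀ (ω : Ω) : 0 ≤ Z ω ^ (p - 1) * W ω := mul_nonneg (Real.rpow_nonneg (hZ ω).le _) (hW ω)
  have hK : 0 ≤ K := (integral_nonneg hZp₀).trans hZp_le
  calc ∫ ω, W ω ^ p ∂μ
      = ∫ ω, (Z ω ^ (p - 1) * W ω) ^ p * (Z ω ^ p) ^ (1 - p) ∂μ := by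
        simp only [← fun ω ↦ rpow_eq_deflated_rpow_mul (hW ω) (hZ ω) p]
    _ ≤ (∫ ω, Z ω ^ (p - 1) * W ω ∂μ) ^ p * (∫ ω, Z ω ^ p ∂μ) ^ (1 - p) :=
        integral_rpow_mul_rpow_le hZW hZp hZW₀ hZp₀ hp₀ (sub_nonneg.2 hp₁) (add_sub_cancel _ _)
    _ ≤ (K * s) ^ p * K ^ (1 - p) :=
        mul_le_mul (Real.rpow_le_rpow (integral_nonneg hZW₀) hZW_le hp₀)
          (Real.rpow_le_rpow (integral_nonneg hZp₀) hZp_le (sub_nonneg.2 hp₁))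
          (Real.rpow_nonneg (integral_nonneg hZp₀) _) (Real.rpow_nonneg (mul_nonneg hK hs) _)
    _ = K * s ^ p := by
        rw [Real.mul_rpow hK hs, mul_right_comm, ← Real.rpow_add' hK (by norm_num),
          add_sub_cancel, Real.rpow_one]

end Deflator

section GaussianExponential

variable {Ω : Type*} [MeasurableSpace Ω] {μ : Measure Ω} {X : Ω → ℝ} {m : ℝ} {v : ℝ≥0}

lemma integrable_exp_add_mul_of_hasLaw_gaussianReal (hX : HasLaw X (gaussianReal m v) μ)
    (c d : ℝ) : Integrable (fun ω ↦ Real.exp (c + d * X ω)) μ := by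
  have : IsProbabilityMeasure μ := hX.isProbabilityMeasure
  have hd : Integrable (fun ω ↦ Real.exp (d * X ω)) μ :=
    mgf_pos_iff.1 (by rw [mgf_gaussianReal hX.map_eq]; positivity)
  simpa only [Real.exp_add] using hd.const_mul (Real.exp c)

lemma integral_exp_add_mul_of_hasLaw_gaussianReal (hX : HasLaw X (gaussianReal m v) μ)
    (c d : ℝ) :
    ∫ ω, Real.exp (c + d * X ω) ∂μ = Real.exp (c + (m * d + v * d ^ 2 / 2)) := by
  simp only [Real.exp_add c, integral_const_mul]
  rw [← mgf_gaussianReal hX.map_eq, mgf]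

end GaussianExponential

section ConstantProportion

/-- The value at time `t` of unit initial capital that is continuously rebalanced so as to keep the
fraction `u` of the wealth in the geometric Brownian motion `J` with drift `α` and volatility `β`,
the rest being held as cash; `b` stands for the value `B t` of the driving Brownian motion. -/
noncomputable def rebalancedWealth (α β u t b : ℝ) : ℝ :=
  Real.exp ((α * u - β ^ 2 * u ^ 2 / 2) * t + β * u * b)

/-- The growth rate of the certainty equivalent `E[Z ^ p] ^ (1 / p)`, where `Z` is the wealth of the
strategy keeping the fraction `u` in the risky asset. It is not multiplied by `p`, so that the
first-order condition for its maximum remains meaningful at `p = 0`. -/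
noncomputable def growthRate (p α β u : ℝ) : ℝ :=
  α * u - (1 - p) / 2 * β ^ 2 * u ^ 2

variable {p α β u v w k x y : ℝ}

lemma rebalancedWealth_pos (α β u t b : ℝ) : 0 < rebalancedWealth α β u t b :=
  Real.exp_pos _

lemma rebalancedWealth_zero (α β t b : ℝ) : rebalancedWealth α β 0 t b = 1 := by
  simp [rebalancedWealth]

lemma rebalancedWealth_one (α β t b : ℝ) :
    rebalancedWealth α β 1 t b = Real.exp ((α - β ^ 2 / 2) * t + β * b) := by
  simp [rebalancedWealth]

lemma continuous_growthRate (p α β : ℝ) : Continuous (growthRate p α β) := by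
  unfold growthRate
  fun_prop

lemma mul_growthRate (p α β u : ℝ) :
    p * growthRate p α β u = p * α * u - p * (1 - p) / 2 * β ^ 2 * u ^ 2 := by
  unfold growthRate
  ring

lemma hasDerivAt_growthRate (p α β u : ℝ) :
    HasDerivAt (growthRate p α β) (α - (1 - p) * β ^ 2 * u) u := by
  convert! ((hasDerivAt_id u).const_mul α).sub
    (((hasDerivAt_id u).pow 2).const_mul ((1 - p) / 2 * β ^ 2)) using 1
  simp only [mul_one, Nat.cast_ofNat, id_eq, Nat.add_one_sub_one, pow_one, sub_right_inj]
  ring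

lemma rebalancedWealth_rpow_sub_one_mul_self (p α β u t b : ℝ) :
    rebalancedWealth α β u t b ^ (p - 1) * rebalancedWealth α β u t b =
      rebalancedWealth α β u t b ^ p := by
  rw [← Real.rpow_add_one (rebalancedWealth_pos α β u t b).ne', sub_add_cancel]

lemma rebalancedWealth_rpow_sub_one_mul (p α β u w t b : ℝ) :
    rebalancedWealth α β u t b ^ (p - 1) * rebalancedWealth α β w t b =
      Real.exp (((p - 1) * (α * u - β ^ 2 * u ^ 2 / 2) + (α * w - β ^ 2 * w ^ 2 / 2)) * t +
        β * ((p - 1) * u + w) * b) := by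
  simp only [rebalancedWealth, ← Real.exp_mul, ← Real.exp_add]
  ring_nf

variable {Ω : Type*} [MeasurableSpace Ω] {μ : Measure Ω} {X : Ω → ℝ} {t : ℝ≥0}

lemma integrable_rebalancedWealth_rpow_sub_one_mul (hX : HasLaw X (gaussianReal 0 t) μ)
    (p α β u w : ℝ) :
    Integrable (fun ω ↦
      rebalancedWealth α β u t (X ω) ^ (p - 1) * rebalancedWealth α β w t (X ω)) μ := by
  simpa only [rebalancedWealth_rpow_sub_one_mul] using
    integrable_exp_add_mul_of_hasLaw_gaussianReal hX _ _

lemma integral_rebalancedWealth_rpow_sub_one_mul (hX : HasLaw X (gaussianReal 0 t) μ)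
    (p α β u w : ℝ) :
    ∫ ω, rebalancedWealth α β u t (X ω) ^ (p - 1) * rebalancedWealth α β w t (X ω) ∂μ =
      Real.exp ((p * growthRate p α β u + (w - u) * (α - (1 - p) * β ^ 2 * u)) * t) := by
  simp only [rebalancedWealth_rpow_sub_one_mul, integral_exp_add_mul_of_hasLaw_gaussianReal hX,
    growthRate]
  ring_nf

lemma integral_rebalancedWealth_rpow_sub_one_mul_le (hX : HasLaw X (gaussianReal 0 t) μ)
    (hmax : IsMaxOn (growthRate p α β) (Set.Icc 0 1) u) (hk : p * growthRate p α β u ≤ k)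
    (hu : u ∈ Set.Icc 0 1) (hw : w ∈ Set.Icc 0 1) :
    ∫ ω, rebalancedWealth α β u t (X ω) ^ (p - 1) * rebalancedWealth α β w t (X ω) ∂μ ≤
      Real.exp (k * t) := by
  have first_order : (w - u) * (α - (1 - p) * β ^ 2 * u) ≤ 0 :=
    sub_mul_nonpos_of_isMaxOn (convex_Icc 0 1) hmax (hasDerivAt_growthRate p α β u) hu hw
  rw [integral_rebalancedWealth_rpow_sub_one_mul hX]
  gcongr
  linarith

lemma integrable_rebalancedWealth_rpow (hX : HasLaw X (gaussianReal 0 t) μ) (p α β u : ℝ) :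
    Integrable (fun ω ↦ rebalancedWealth α β u t (X ω) ^ p) μ := by
  simpa only [rebalancedWealth_rpow_sub_one_mul_self] using
    integrable_rebalancedWealth_rpow_sub_one_mul hX p α β u u

lemma integral_rebalancedWealth_rpow (hX : HasLaw X (gaussianReal 0 t) μ)
    (p α β u : ℝ) :
    ∫ ω, rebalancedWealth α β u t (X ω) ^ p ∂μ = Real.exp (p * growthRate p α β u * t) := by
  simpa only [rebalancedWealth_rpow_sub_one_mul_self, sub_self, zero_mul, add_zero] using
    integral_rebalancedWealth_rpow_sub_one_mul hX p α β u u

lemma integrable_deflated_combination (hX : HasLaw X (gaussianReal 0 t) μ)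
    (p α β u v w x y : ℝ) :
    Integrable (fun ω ↦ rebalancedWealth α β u t (X ω) ^ (p - 1) *
      (x * rebalancedWealth α β v t (X ω) + y * rebalancedWealth α β w t (X ω))) μ := by
  simp only [mul_add, mul_left_comm _ x, mul_left_comm _ y]
  exact ((integrable_rebalancedWealth_rpow_sub_one_mul hX p α β u v).const_mul x).add
    ((integrable_rebalancedWealth_rpow_sub_one_mul hX p α β u w).const_mul y)

lemma integral_deflated_combination_le (hX : HasLaw X (gaussianReal 0 t) μ)
    (hmax : IsMaxOn (growthRate p α β) (Set.Icc 0 1) u) (hk : p * growthRate p α β u ≤ k)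
    (hu : u ∈ Set.Icc 0 1) (hv : v ∈ Set.Icc 0 1) (hw : w ∈ Set.Icc 0 1) (hx : 0 ≤ x)
    (hy : 0 ≤ y) :
    ∫ ω, rebalancedWealth α β u t (X ω) ^ (p - 1) *
        (x * rebalancedWealth α β v t (X ω) + y * rebalancedWealth α β w t (X ω)) ∂μ ≤
      Real.exp (k * t) * (x + y) := by
  simp only [mul_add, mul_left_comm _ x, mul_left_comm _ y]
  rw [integral_add ((integrable_rebalancedWealth_rpow_sub_one_mul hX p α β u v).const_mul x)
      ((integrable_rebalancedWealth_rpow_sub_one_mul hX p α β u w).const_mul y),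
    integral_const_mul, integral_const_mul, mul_comm _ x, mul_comm _ y]
  gcongr
  · exact integral_rebalancedWealth_rpow_sub_one_mul_le hX hmax hk hu hv
  · exact integral_rebalancedWealth_rpow_sub_one_mul_le hX hmax hk hu hw

end ConstantProportion

theorem gbm_power_moment_bound_general
    {Ω : Type*} [MeasurableSpace Ω] {μ : Measure Ω} {X : Ω → ℝ} {t : ℝ≥0}
    (hX : HasLaw X (gaussianReal 0 t) μ) {p α β k x y : ℝ} (hp : p ∈ Set.Icc 0 1)
    (hk : ∀ u ∈ Set.Icc (0 : ℝ) 1, p * α * u - p * (1 - p) / 2 * β ^ 2 * u ^ 2 ≤ k)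
    (hx : 0 ≤ x) (hy : 0 ≤ y) :
    Integrable (fun ω ↦ (x + y * Real.exp ((α - β ^ 2 / 2) * t + β * X ω)) ^ p) μ ∧
      ∫ ω, (x + y * Real.exp ((α - β ^ 2 / 2) * t + β * X ω)) ^ p ∂μ ≤
        Real.exp (k * t) * (x + y) ^ p := by
  obtain ⟨u, hu, hmax⟩ := isCompact_Icc.exists_isMaxOn (Set.nonempty_Icc.2 (zero_le_one' ℝ))
    (continuous_growthRate p α β).continuousOn
  have hku : p * growthRate p α β u ≤ k := (mul_growthRate p α β u).trans_le (hk u hu)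
  have wealth_eq (ω : Ω) : x + y * Real.exp ((α - β ^ 2 / 2) * t + β * X ω) =
      x * rebalancedWealth α β 0 t (X ω) + y * rebalancedWealth α β 1 t (X ω) := by
    rw [rebalancedWealth_zero, rebalancedWealth_one, mul_one]
  have wealth_nonneg (ω : Ω) :
      0 ≤ x * rebalancedWealth α β 0 t (X ω) + y * rebalancedWealth α β 1 t (X ω) := by
    rw [← wealth_eq]
    positivity
  have deflator_pos (ω : Ω) : 0 < rebalancedWealth α β u t (X ω) := rebalancedWealth_pos ..
  have power_le : ∫ ω, rebalancedWealth α β u t (X ω) ^ p ∂μ ≤ Real.exp (k * t) := by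
    rw [integral_rebalancedWealth_rpow hX]
    gcongr
  have integrable_power := integrable_rebalancedWealth_rpow hX p α β u
  have integrable_deflated := integrable_deflated_combination hX p α β u 0 1 x y
  simp only [wealth_eq]
  exact ⟨integrable_rpow_of_deflated hp wealth_nonneg deflator_pos integrable_power
      integrable_deflated,
    integral_rpow_le_of_deflated hp wealth_nonneg deflator_pos integrable_power
      integrable_deflated (add_nonneg hx hy) power_le
      (integral_deflated_combination_le hX hmax hku hu (by simp) (by simp) hx hy)⟩

theorem gbm_power_moment_bound
    {Ω : Type*} [MeasurableSpace Ω] (μ : Measure Ω) [IsProbabilityMeasure μ]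
    (p α β : ℝ) (hp : p ∈ Set.Ioo (0:ℝ) 1) (hβ : 0 < β)
    (B : ℝ → Ω → ℝ) (hB0 : ∀ ω, B 0 ω = 0)
    (hBlaw : ∀ t : ℝ, 0 ≤ t →
      Measure.map (B t) μ = gaussianReal 0 (ENNReal.ofReal t).toNNReal)
    (J : ℝ → Ω → ℝ)
    (hJ : ∀ t ω, J t ω = Real.exp ((α - β ^ 2 / 2) * t + β * B t ω))
    (k : ℝ)
    (hk : k = sSup {z : ℝ | ∃ u : ℝ, u ∈ Set.Icc (0:ℝ) 1 ∧
      z = p * α * u - p * (1 - p) / 2 * β ^ 2 * u ^ 2})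
    (t x y : ℝ) (ht : 0 ≤ t) (hx : 0 ≤ x) (hy : 0 ≤ y) :
    0 ≤ (∫ ω, (x + y * J t ω) ^ p ∂μ) ∧
      (∫ ω, (x + y * J t ω) ^ p ∂μ) ≤ Real.exp (k * t) * (x + y) ^ p := by
  have hB : HasLaw (B t) (gaussianReal 0 t.toNNReal) μ :=
    ⟨aemeasurable_of_map_neZero (by rw [hBlaw t ht]; infer_instance), hBlaw t ht⟩
  have hk_le (u : ℝ) (hu : u ∈ Set.Icc 0 1) :
      p * α * u - p * (1 - p) / 2 * β ^ 2 * u ^ 2 ≤ k := by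
    rw [hk]
    exact le_sSup_of_isCompact_of_continuousOn
      (f := fun u ↦ p * α * u - p * (1 - p) / 2 * β ^ 2 * u ^ 2) isCompact_Icc (by fun_prop) hu
  refine ⟨integral_nonneg fun ω ↦ ?_, ?_⟩
  · rw [hJ]
    positivity
  · simpa only [hJ, Real.coe_toNNReal t ht] using
      (gbm_power_moment_bound_general hB (Set.Ioo_subset_Icc_self hp) hk_le hx hy).2
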